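/- The equation tan(z) + tanh(z) = 0 has a unique root ẑ₀ in the interval (0, π); this root lies in (π/2, π), and consequently ẑ₀·tanh(ẑ₀) > (π/2)·tanh(π/2) > 1. -/

import Mathlib

open Real

/-!
For `t > 0` and `z ∈ (0, π)`, the equation `tan z + t = 0` says that `z = π - arctan t`. With
`t = tanh z` it becomes `z + arctan (tanh z) = π`, which has no poles: its left side is a continuous
strictly increasing bijection of `ℝ`, so there is exactly one root, and `arctan < π / 2` puts that
root beyond `π / 2`.
-/

lemma tan_add_eq_zero_iff_add_arctan_eq_pi {z t : ℝ} (hz : z ∈ Set.Ioo 0 π) (ht : 0 < t) :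
    tan z + t = 0 ↔ z + arctan t = π := by
  have arctan_lt := arctan_lt_pi_div_two t
  rcases le_or_gt z (π / 2) with hz_le | hz_gt
  · -- This case includes `z = π / 2`, where `tan` takes the junk value `0`.
    have tan_nonneg := tan_nonneg_of_nonneg_of_le_pi_div_two hz.1.le hz_le
    constructor <;> intro <;> linarith
  · have arctan_tan_sub_pi : arctan (tan (z - π)) = z - π :=
      arctan_tan (by linarith) (by linarith [hz.2, pi_pos])
    calc tan z + t = 0
      _ ↔ tan (z - π) = -t := by rw [tan_sub_pi, eq_neg_iff_add_eq_zero]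
      _ ↔ z - π = -arctan t := by
        rw [← arctan_inj, arctan_tan_sub_pi, arctan_neg]
      _ ↔ z + arctan t = π := by constructor <;> intro <;> linarith

section AddArctan

variable {g : ℝ → ℝ}

lemma strictMono_add_arctan_comp (hg : Monotone g) : StrictMono fun z ↦ z + arctan (g z) :=
  strictMono_id.add_monotone (arctan_mono.comp hg)

lemma surjective_add_arctan_comp (hg : Continuous g) :
    Function.Surjective fun z ↦ z + arctan (g z) :=
  Continuous.surjective (by fun_prop)
    (Filter.tendsto_atTop_add_right_of_le _ _ Filter.tendsto_id
      fun z ↦ (neg_pi_div_two_lt_arctan (g z)).le)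
    (Filter.tendsto_atBot_add_right_of_ge _ _ Filter.tendsto_id
      fun z ↦ (arctan_lt_pi_div_two (g z)).le)

lemma existsUnique_tan_add_eq_zero (hg_cont : Continuous g) (hg_mono : Monotone g)
    (hg_pos : ∀ z, 0 < z → 0 < g z) : ∃! z, z ∈ Set.Ioo 0 π ∧ tan z + g z = 0 := by
  obtain ⟨z, hz : z + arctan (g z) = π⟩ := surjective_add_arctan_comp hg_cont π
  have z_pos : 0 < z := by linarith [arctan_lt_pi_div_two (g z), pi_pos]
  have z_lt_pi : z < π := by linarith [arctan_pos.2 (hg_pos z z_pos)]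
  refine ⟨z, ⟨⟨z_pos, z_lt_pi⟩, ?_⟩, fun w ⟨hw, w_root⟩ ↦ ?_⟩
  · exact (tan_add_eq_zero_iff_add_arctan_eq_pi ⟨z_pos, z_lt_pi⟩ (hg_pos z z_pos)).2 hz
  · rw [tan_add_eq_zero_iff_add_arctan_eq_pi hw (hg_pos w hw.1)] at w_root
    exact (strictMono_add_arctan_comp hg_mono).injective (w_root.trans hz.symm)

end AddArctan

lemma pi_div_two_lt_of_tan_add_eq_zero {z t : ℝ} (hz : z ∈ Set.Ioo 0 π) (ht : 0 < t)
    (h : tan z + t = 0) : π / 2 < z := by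
  rw [tan_add_eq_zero_iff_add_arctan_eq_pi hz ht] at h
  linarith [arctan_lt_pi_div_two t]

lemma tanh_eq_one_sub_two_div (x : ℝ) : tanh x = 1 - 2 / (exp (2 * x) + 1) := by
  rw [tanh_eq, exp_neg, two_mul, exp_add]
  field_simp
  ring

lemma continuous_tanh : Continuous tanh := by
  rw [funext tanh_eq_sinh_div_cosh]
  exact continuous_sinh.div continuous_cosh fun x ↦ (cosh_pos x).ne'

lemma strictMono_tanh : StrictMono tanh := by
  intro x y hxy
  simp only [tanh_eq_one_sub_two_div]
  gcongr

lemma tanh_pos {x : ℝ} (hx : 0 < x) : 0 < tanh x := by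
  simpa only [tanh_zero] using strictMono_tanh hx

lemma strictMonoOn_mul_tanh : StrictMonoOn (fun x ↦ x * tanh x) (Set.Ici 0) := by
  intro x hx y _ hxy
  have tanh_nonneg : 0 ≤ tanh x := by
    simpa only [tanh_zero] using strictMono_tanh.monotone hx
  exact mul_lt_mul'' hxy (strictMono_tanh hxy) hx tanh_nonneg

lemma two_thirds_lt_tanh_three_halves : 2 / 3 < tanh (3 / 2) := by
  have five_lt_exp : 5 < exp (2 * (3 / 2)) := by
    linarith [quadratic_le_exp_of_nonneg (x := 2 * (3 / 2)) (by norm_num)]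
  rw [tanh_eq_one_sub_two_div, lt_sub_comm, div_lt_iff₀ (by positivity)]
  linarith

lemma one_lt_pi_div_two_mul_tanh : 1 < π / 2 * tanh (π / 2) :=
  have three_halves_lt : 3 / 2 < π / 2 := by linarith [pi_gt_three]
  calc 1 < 3 / 2 * tanh (3 / 2) := by linarith [two_thirds_lt_tanh_three_halves]
    _ < π / 2 * tanh (π / 2) :=
      strictMonoOn_mul_tanh (by norm_num : (0 : ℝ) ≤ 3 / 2) pi_div_two_pos.le three_halves_lt

/-- The equation `tan z + tanh z = 0` has a unique root `ẑ₀` in the interval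
`(0,π)`; this root lies in `(π/2, π)`, and consequently
`ẑ₀·tanh ẑ₀ > (π/2)·tanh(π/2) > 1`. -/
theorem tan_add_tanh_unique_root :
    (∃! z : ℝ, z ∈ Set.Ioo 0 π ∧ Real.tan z + Real.tanh z = 0) ∧
    (∀ z ∈ Set.Ioo (0:ℝ) π, Real.tan z + Real.tanh z = 0 →
      π / 2 < z ∧ π / 2 * Real.tanh (π / 2) < z * Real.tanh z) ∧
    1 < π / 2 * Real.tanh (π / 2) := by
  refine ⟨existsUnique_tan_add_eq_zero continuous_tanh strictMono_tanh.monotone fun _ ↦ tanh_pos,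
    fun z hz z_root ↦ ?_, one_lt_pi_div_two_mul_tanh⟩
  have pi_div_two_lt : π / 2 < z := pi_div_two_lt_of_tan_add_eq_zero hz (tanh_pos hz.1) z_root
  exact ⟨pi_div_two_lt, strictMonoOn_mul_tanh pi_div_two_pos.le hz.1.le pi_div_two_lt⟩
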